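/- Let U and V be finite-dimensional vector spaces over the field K with exactly 2 elements, and let S be a linear subspace of L(U,V) with codim S ≤ 2·dim V − 6. Then either S has special type 1 or special type 2, or every quasi-range-compatible additive group homomorphism F : S → V is local. -/

import Mathlib

namespace QRC

open Module

section basic
variable {K : Type*} [Field K]

lemma two_eq (h2 : ∀ c : K, c = 0 ∨ c = 1) : (1 : K) + 1 = 0 := by
  rcases h2 (1 + 1) with h | h
  · exact h
  · exfalso
    simp at h

lemma add_self {V : Type*} [AddCommGroup V] [Module K V]
    (h2 : ∀ c : K, c = 0 ∨ c = 1) (v : V) : v + v = 0 := by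
  have : ((1 : K) + 1) • v = 0 := by rw [two_eq h2, zero_smul]
  simpa [add_smul] using this

lemma add_eq_zero_iff {V : Type*} [AddCommGroup V] [Module K V]
    (h2 : ∀ c : K, c = 0 ∨ c = 1) (v w : V) : v + w = 0 ↔ v = w := by
  constructor
  · intro h
    have := add_self h2 w
    exact add_right_cancel (h.trans this.symm)
  · rintro rfl
    exact add_self h2 v

lemma mem_span_iff {V : Type*} [AddCommGroup V] [Module K V]
    (h2 : ∀ c : K, c = 0 ∨ c = 1) (v w : V) : v ∈ K ∙ w ↔ v = 0 ∨ v = w := by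
  rw [Submodule.mem_span_singleton]
  constructor
  · rintro ⟨c, rfl⟩
    rcases h2 c with rfl | rfl <;> simp
  · rintro (rfl | rfl)
    · exact ⟨0, by simp⟩
    · exact ⟨1, by simp⟩

lemma exists_factor {A B C : Type*} [AddCommGroup A] [Module K A] [AddCommGroup B] [Module K B]
    [AddCommGroup C] [Module K C] (f : A →ₗ[K] B) (g : A →ₗ[K] C)
    (h : ∀ a, f a = 0 → g a = 0) : ∃ k : B →ₗ[K] C, ∀ a, k (f a) = g a := by
  have hk : LinearMap.ker f ≤ LinearMap.ker g := fun a ha => h a ha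
  obtain ⟨k, hk2⟩ := LinearMap.exists_extend
    (((LinearMap.ker f).liftQ g hk).comp f.quotKerEquivRange.symm.toLinearMap)
  refine ⟨k, fun a => ?_⟩
  have := congrArg (fun l => l ⟨f a, LinearMap.mem_range_self f a⟩) hk2
  simp only [LinearMap.comp_apply, Submodule.subtype_apply] at this
  rw [this]
  have : f.quotKerEquivRange.symm ⟨f a, LinearMap.mem_range_self f a⟩
      = (LinearMap.ker f).mkQ a := by
    rw [LinearEquiv.symm_apply_eq]
    rfl
  simp [this]

/-- dual functionals of an independent pair -/
lemma exists_dual_pair {U : Type*} [AddCommGroup U] [Module K U] [FiniteDimensional K U]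
    (h2 : ∀ c : K, c = 0 ∨ c = 1) (a b : U) (ha : a ≠ 0) (hab : a ≠ b) :
    ∃ f : Dual K U, f a = 1 ∧ f b = 0 := by
  have : a ∉ K ∙ b := by
    rw [mem_span_iff h2]; tauto
  obtain ⟨f, hf, hf'⟩ := Submodule.exists_dual_map_eq_bot_of_notMem this inferInstance
  refine ⟨f, (h2 _).resolve_left hf, ?_⟩
  have hb : f b ∈ (K ∙ b).map f := ⟨b, Submodule.mem_span_singleton_self b, rfl⟩
  rw [hf'] at hb
  simpa using hb

lemma exists_third {V : Type*} [AddCommGroup V] [Module K V] [FiniteDimensional K V]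
    (h2 : ∀ c : K, c = 0 ∨ c = 1) (hm : 4 ≤ finrank K V) (q : V → K)
    (hq : ∀ y u v w, q y + q (y + u) + q (y + v) + q (y + w) + q (y + u + v) + q (y + u + w)
      + q (y + v + w) + q (y + u + v + w) = 0)
    (y0 : V) (hy0 : q y0 ≠ 0) (p1 p2 : V) : ∃ y, y ≠ p1 ∧ y ≠ p2 ∧ q y ≠ 0 := by
  by_contra! hcon
  wlog h : q p1 ≠ 0 generalizing p1 p2 with H
  · push Not at h
    by_cases h' : q p2 ≠ 0
    · exact H p2 p1 (fun y a b => hcon y b a) h'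
    · push Not at h'
      by_cases e1 : y0 = p1
      · subst e1; exact hy0 h
      · by_cases e2 : y0 = p2
        · subst e2; exact hy0 h'
        · exact hy0 (hcon y0 e1 e2)
  obtain ⟨f, hf⟩ : ∃ f : Dual K V, p2 ≠ p1 → f (p2 - p1) ≠ 0 := by
    by_cases e : p2 = p1
    · exact ⟨0, fun h => absurd e h⟩
    · obtain ⟨f, hf, -⟩ := exists_dual_pair h2 (p2 - p1) 0 (sub_ne_zero.2 e) (sub_ne_zero.2 e)
      exact ⟨f, fun _ => by rw [hf]; exact one_ne_zero⟩
  have hker : 3 ≤ finrank K (LinearMap.ker f) := by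
    have := LinearMap.finrank_range_add_finrank_ker f
    have h3 : finrank K (LinearMap.range f) ≤ 1 := by
      simpa using Submodule.finrank_le (LinearMap.range f)
    omega
  obtain ⟨b, hb⟩ : ∃ b : Fin 3 → LinearMap.ker f, LinearIndependent K b :=
    exists_linearIndependent_of_le_finrank hker
  have key : ∀ c : Fin 3 → K, c ≠ 0 → q (p1 + ∑ i, c i • (b i : V)) = 0 := by
    intro c hc
    have hz : (∑ i, c i • (b i : V)) ≠ 0 := by
      intro h0
      apply hc
      have : ∑ i, c i • b i = 0 := by
        apply Subtype.ext
        simpa using h0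
      funext i
      exact Fintype.linearIndependent_iff.1 hb c this i
    apply hcon
    · intro h; exact hz (by simpa using h)
    · intro h
      have hne : p2 ≠ p1 := by
        rintro rfl; exact hz (by simpa using h)
      apply hf hne
      rw [← h]
      simp [map_sum]
  have k1 := key ![1,0,0] (by simp)
  have k2 := key ![0,1,0] (by simp)
  have k3 := key ![0,0,1] (by simp)
  have k4 := key ![1,1,0] (by simp)
  have k5 := key ![1,0,1] (by simp)
  have k6 := key ![0,1,1] (by simp)
  have k7 := key ![1,1,1] (by simp)
  simp only [Fin.sum_univ_three, Matrix.cons_val_zero, Matrix.cons_val_one, Matrix.cons_val,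
    one_smul, zero_smul, add_zero, zero_add] at k1 k2 k3 k4 k5 k6 k7
  have := hq p1 (b 0) (b 1) (b 2)
  simp only [add_assoc] at this k1 k2 k3 k4 k5 k6 k7
  rw [k1, k2, k3, k4, k5, k6, k7] at this
  exact h (by simpa using this)

lemma exists_two {V : Type*} [AddCommGroup V] [Module K V] [FiniteDimensional K V]
    (h2 : ∀ c : K, c = 0 ∨ c = 1) (hm : 4 ≤ finrank K V) (a b c e : Dual K V)
    (y0 : V) (hy0 : a y0 * b y0 + c y0 * e y0 ≠ 0) (d : V) :
    ∃ y1 y2, y1 ≠ d ∧ y2 ≠ d ∧ y1 ≠ y2 ∧ a y1 * b y1 + c y1 * e y1 ≠ 0 ∧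
      a y2 * b y2 + c y2 * e y2 ≠ 0 := by
  have hq : ∀ y u v w, (fun y => a y * b y + c y * e y) y + (fun y => a y * b y + c y * e y) (y + u)
      + (fun y => a y * b y + c y * e y) (y + v) + (fun y => a y * b y + c y * e y) (y + w)
      + (fun y => a y * b y + c y * e y) (y + u + v) + (fun y => a y * b y + c y * e y) (y + u + w)
      + (fun y => a y * b y + c y * e y) (y + v + w)
      + (fun y => a y * b y + c y * e y) (y + u + v + w) = 0 := by
    intro y u v w
    have h := two_eq h2
    simp only [map_add]
    have : ∀ p q r s p' q' r' s' : K, p * p' + (p + q) * (p' + q') + (p + r) * (p' + r') +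
      (p + s) * (p' + s') + (p + q + r) * (p' + q' + r') + (p + q + s) * (p' + q' + s')
      + (p + r + s) * (p' + r' + s') + (p + q + r + s) * (p' + q' + r' + s') = 0 := by
      intro p q r s p' q' r' s'
      have e : ∀ z : K, z * (1 + 1) = 0 := fun z => by rw [h, mul_zero]
      linear_combination e (4*p*p'+2*p*q'+2*p*r'+2*p*s'+2*q*p'+2*q*q'+q*r'+q*s'+2*r*p'+r*q'+2*r*r'
        +r*s'+2*s*p'+s*q'+s*r'+2*s*s')
    linear_combination this (a y) (a u) (a v) (a w) (b y) (b u) (b v) (b w)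
      + this (c y) (c u) (c v) (c w) (e y) (e u) (e v) (e w)
  obtain ⟨y1, h1, -, h1'⟩ := exists_third h2 hm _ hq y0 hy0 d d
  obtain ⟨y2, h3, h3', h3''⟩ := exists_third h2 hm _ hq y0 hy0 d y1
  exact ⟨y1, y2, h1, h3, fun h => h3' h.symm, h1', h3''⟩

lemma zero_or_id {V : Type*} [AddCommGroup V] [Module K V] [FiniteDimensional K V]
    (h2 : ∀ c : K, c = 0 ∨ c = 1) (hm : 3 ≤ finrank K V) (g : V →ₗ[K] V) (d : V)
    (hg : ∀ y, y ≠ d → g y = 0 ∨ g y = y) : ∃ c : K, ∀ y, g y = c • y := by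
  have hex : ∀ a b : V, ∃ c, c ∉ Submodule.span K {a, b} := by
    intro a b
    by_contra! h
    classical
    have : Submodule.span K {a, b} = ⊤ := by ext; simp [h]
    have h3 : finrank K (Submodule.span K (({a, b} : Finset V) : Set V)) ≤ 2 :=
      (finrank_span_finset_le_card _).trans Finset.card_le_two
    rw [Finset.coe_pair, this, finrank_top] at h3
    omega
  have main : ∀ a b : V, a ≠ d → b ≠ d → a ≠ 0 → b ≠ 0 → g a = a → g b = 0 → False := by
    intro a b ha hb ha0 hb0 hga hgb
    have hd : a + b = d := by
      by_contra h
      rcases hg _ h with h' | h' <;> rw [map_add, hga, hgb, add_zero] at h'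
      · exact ha0 h'
      · exact hb0 (by simpa using h')
    obtain ⟨c, hc⟩ := hex a b
    have hca : a ∈ Submodule.span K {a, b} := Submodule.subset_span (by simp)
    have hcb : b ∈ Submodule.span K {a, b} := Submodule.subset_span (by simp)
    have hcd : c ≠ d := by
      rintro rfl; rw [← hd] at hc; exact hc (add_mem hca hcb)
    have hc0 : c ≠ 0 := by
      rintro rfl; exact hc (zero_mem _)
    rcases hg c hcd with h | h
    · have : a + c ≠ d := by
        rw [← hd]; intro h'; rw [add_left_cancel h'] at hc; exact hc hcb
      rcases hg _ this with h' | h' <;> rw [map_add, hga, h, add_zero] at h'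
      · exact ha0 h'
      · exact hc0 (by simpa using h')
    · have : b + c ≠ d := by
        rw [← hd, add_comm a]; intro h'; rw [add_left_cancel h'] at hc; exact hc hca
      rcases hg _ this with h' | h' <;> rw [map_add, hgb, h, zero_add] at h'
      · exact hc0 h'
      · exact hb0 (by simpa using h')
  have fin : ∀ k : K, (∀ y, y ≠ d → g y = k • y) → ∀ y, g y = k • y := by
    intro k hk y
    by_cases hy : y = d
    · obtain ⟨c, hc⟩ := hex y 0
      have hy' : y ∈ Submodule.span K {y, 0} := Submodule.subset_span (by simp)
      have e1 := hk c (by rintro rfl; rw [hy] at hc hy'; exact hc hy')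
      have e2 := hk (c + y) (by
        rw [← hy]; intro h; apply hc; have : c = 0 := by simpa using h
        rw [this]; exact zero_mem _)
      rw [map_add, e1, smul_add] at e2
      exact add_left_cancel e2
    · exact hk y hy
  by_cases h : ∃ a, a ≠ d ∧ a ≠ 0 ∧ g a = a
  · obtain ⟨a, had, ha0, ha⟩ := h
    refine ⟨1, fin 1 fun y hy => ?_⟩
    rw [one_smul]
    by_cases hy0 : y = 0
    · simp [hy0]
    · exact (hg y hy).resolve_left fun h' => main a y had hy ha0 hy0 ha h'
  · push Not at h
    refine ⟨0, fin 0 fun y hy => ?_⟩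
    rw [zero_smul]
    by_cases hy0 : y = 0
    · simp [hy0]
    · exact (hg y hy).resolve_right (h y hy hy0)

lemma rank_one {V U : Type*} [AddCommGroup V] [Module K V] [AddCommGroup U] [Module K U]
    (h2 : ∀ c : K, c = 0 ∨ c = 1) (T : Submodule K (V →ₗ[K] U))
    (hT : ∀ t1 ∈ T, ∀ t2 ∈ T, ∀ y, t1 y = 0 ∨ t2 y = 0 ∨ t1 y = t2 y) :
    (∃ x, ∀ t ∈ T, ∀ y, t y = 0 ∨ t y = x) ∨ (∃ t ∈ T, ∀ s ∈ T, s = 0 ∨ s = t) := by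
  by_cases hx : ∃ x, ∀ t ∈ T, ∀ y, t y = 0 ∨ t y = x
  · exact Or.inl hx
  right
  push Not at hx
  obtain ⟨t, ht, y, hty, -⟩ := hx 0
  obtain ⟨t', ht', y', hty', hne⟩ := hx (t y)
  have hz : ∀ u v : U, u + v = 0 ↔ u = v := add_eq_zero_iff h2
  have e1 := hT t ht t' ht' y
  have e2 := hT t ht t' ht' y'
  have e3 := hT t ht t' ht' (y + y')
  simp only [map_add] at e3
  have f1 : t' y = t y := by
    by_contra hcon
    have : t' y = 0 := by tauto
    rw [this, zero_add, hz] at e3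
    rcases e2 with e | e | e
    · rw [e] at e3; simp at e3; tauto
    · tauto
    · rw [e] at e3; simp at e3; tauto
  have f2 : t y' = t' y' := by
    by_contra hcon
    have : t y' = 0 := by tauto
    rw [this, add_zero, f1, hz] at e3
    have e3 := e3.resolve_left hty
    rcases e3 with e | e
    · exact hne e.symm
    · exact hty' (by simpa using e)
  have claim : ∀ s ∈ T, s y = 0 → s = 0 := by
    intro s hs hsy
    have hsy' : s y' = 0 := by
      by_contra hcon
      have g1 := hT s hs t ht y'
      have g2 := hT s hs t ht (y + y')
      rw [map_add, map_add, hsy, zero_add, hz] at g2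
      rcases g2 with g | g | g
      · exact hcon g
      · rw [f2] at g; exact hne g.symm
      · rcases g1 with g' | g' | g'
        · exact hcon g'
        · rw [f2] at g'; exact hty' g'
        · rw [g'] at g; exact hty (by simpa using g)
    ext z
    by_contra hsz
    simp only [LinearMap.zero_apply] at hsz
    have k : ∀ w, s w = 0 → t w ≠ 0 → s z = t w := by
      intro w hw htw
      have g1 := hT s hs t ht z
      have g2 := hT s hs t ht (w + z)
      rw [map_add, map_add, hw, zero_add, hz] at g2
      rcases g1 with g | g | g
      · exact absurd g hsz
      · rw [g] at g2
        rcases g2 with g' | g' | g'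
        · exact absurd g' hsz
        · exact absurd g' htw
        · simpa using g'
      · rw [← g] at g2
        rcases g2 with g' | g' | g'
        · exact absurd g' hsz
        · exact g'.symm
        · exact absurd (by simpa using g') htw
    have k1 := k y hsy hty
    have k2 := k y' hsy' (by rw [f2]; exact hty')
    rw [k1, f2] at k2
    exact hne k2.symm
  refine ⟨t, ht, fun s hs => ?_⟩
  have g1 := hT s hs t ht y
  by_cases hsy : s y = 0
  · exact Or.inl (claim s hs hsy)
  · right
    have : s y = t y := by tauto
    have := claim (s - t) (sub_mem hs ht) (by simp [this])
    exact sub_eq_zero.1 this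

end basic

section dual
variable {K : Type*} [Field K] {U V : Type*} [AddCommGroup U] [Module K U] [FiniteDimensional K U]
    [AddCommGroup V] [Module K V] [FiniteDimensional K V]

/-- trace pairing -/
noncomputable def tf (K U V : Type*) [Field K] [AddCommGroup U] [Module K U]
    [AddCommGroup V] [Module K V] : (V →ₗ[K] U) →ₗ[K] Dual K (U →ₗ[K] V) :=
  LinearMap.mk₂ K (fun t s => LinearMap.trace K V (s ∘ₗ t))
    (by intros; simp [LinearMap.comp_add]) (by intros; simp [LinearMap.comp_smul])
    (by intros; simp [LinearMap.add_comp]) (by intros; simp [LinearMap.smul_comp])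

lemma tf_apply (t : V →ₗ[K] U) (s : U →ₗ[K] V) :
    tf K U V t s = LinearMap.trace K V (s ∘ₗ t) := rfl

lemma tf_smulRight (t : V →ₗ[K] U) (φ : Dual K U) (y : V) :
    tf K U V t (φ.smulRight y) = φ (t y) := by
  have : φ.smulRight y ∘ₗ t = (φ ∘ₗ t).smulRight y := by ext; simp
  rw [tf_apply, this, LinearMap.trace_smulRight]; rfl

lemma tf_smulRight' (s : U →ₗ[K] V) (φ : Dual K V) (x : U) :
    tf K U V (φ.smulRight x) s = φ (s x) := by
  have : s ∘ₗ φ.smulRight x = φ.smulRight (s x) := by ext; simp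
  rw [tf_apply, this, LinearMap.trace_smulRight]

lemma tf_bij : Function.Bijective (tf K U V) := by
  have hinj : Function.Injective (tf K U V) := by
    rw [injective_iff_map_eq_zero]
    intro t ht
    ext y
    rw [LinearMap.zero_apply, ← Module.forall_dual_apply_eq_zero_iff K]
    intro φ
    rw [← tf_smulRight, ht]; rfl
  refine ⟨hinj, ?_⟩
  rw [← LinearMap.injective_iff_surjective_of_finrank_eq_finrank]
  · exact hinj
  · rw [Subspace.dual_finrank_eq, finrank_linearMap, finrank_linearMap, mul_comm]

/-- orthogonal of `T` -/
noncomputable def SS (T : Submodule K (V →ₗ[K] U)) : Submodule K (U →ₗ[K] V) :=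
  (T.map (tf K U V)).dualCoannihilator

lemma mem_SS {T : Submodule K (V →ₗ[K] U)} {s : U →ₗ[K] V} :
    s ∈ SS T ↔ ∀ t ∈ T, tf K U V t s = 0 := by
  simp [SS, Submodule.mem_dualCoannihilator]

lemma mem_T {T : Submodule K (V →ₗ[K] U)} {t : V →ₗ[K] U} :
    t ∈ T ↔ ∀ s ∈ SS T, tf K U V t s = 0 := by
  constructor
  · intro ht s hs; exact mem_SS.1 hs t ht
  · intro h
    have : tf K U V t ∈ (SS T).dualAnnihilator := (Submodule.mem_dualAnnihilator _).2 h
    rw [SS, Subspace.dualCoannihilator_dualAnnihilator_eq] at this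
    obtain ⟨t', ht', e⟩ := this
    rwa [← tf_bij.1 e]

/-- functionals `φ` with `φ ⊗ x ∈ T` -/
noncomputable def AA (T : Submodule K (V →ₗ[K] U)) (x : U) : Submodule K (V →ₗ[K] K) :=
  T.comap (LinearMap.smulRightₗ.flip x)

lemma mem_AA {T : Submodule K (V →ₗ[K] U)} {x : U} {φ : Dual K V} :
    φ ∈ AA T x ↔ φ.smulRight x ∈ T := Iff.rfl

lemma mem_AA' {T : Submodule K (V →ₗ[K] U)} {x : U} {φ : Dual K V} :
    φ ∈ AA T x ↔ ∀ s ∈ SS T, φ (s x) = 0 := by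
  rw [mem_AA, mem_T]
  simp only [tf_smulRight']

/-- No special type 1 or 2 -/
def NN (T : Submodule K (V →ₗ[K] U)) : Prop :=
  ∀ x, finrank K (AA T x) + 3 ≤ finrank K V ∨ AA T x = ⊤

/-- locality of F on `S` -/
def Loc (T : Submodule K (V →ₗ[K] U)) (F : (U →ₗ[K] V) →ₗ[K] V) : Prop :=
  ∃ x, ∀ s ∈ SS T, F s = s x

/-- quasi range compatible -/
def Q (T : Submodule K (V →ₗ[K] U)) (F : (U →ₗ[K] V) →ₗ[K] V) (d : V) : Prop :=
  ∀ s ∈ SS T, d ∉ LinearMap.range s → F s ∈ LinearMap.range s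

lemma full (h2 : ∀ c : K, c = 0 ∨ c = 1) (hm : 3 ≤ finrank K V) (T : Submodule K (V →ₗ[K] U))
    (F : (U →ₗ[K] V) →ₗ[K] V) (d : V) (hd : d ≠ 0) (hF : Q T F d)
    (h : ∀ s ∈ SS T, ∀ (ψ : Dual K V) (y : V), (ψ ∘ₗ s).smulRight y ∈ SS T) : Loc T F := by
  obtain ⟨y0, hy0⟩ : ∃ y0 : V, y0 ≠ 0 := ⟨d, hd⟩
  obtain ⟨f, hf, -⟩ := exists_dual_pair h2 y0 0 hy0 hy0
  have key : ∀ φ : Dual K U, (∀ y : V, φ.smulRight y ∈ SS T) →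
      ∀ y, F (φ.smulRight y) = f (F (φ.smulRight y0)) • y := by
    intro φ hφ
    obtain ⟨c, hc⟩ := zero_or_id h2 hm (F ∘ₗ LinearMap.smulRightₗ φ) d (by
      intro y hy
      have := hF _ (hφ y) (by
        rintro ⟨u, hu⟩
        rw [LinearMap.smulRight_apply] at hu
        rcases h2 (φ u) with e | e <;> rw [e] at hu
        · rw [zero_smul] at hu; exact hd hu.symm
        · rw [one_smul] at hu; exact hy hu)
      obtain ⟨u, hu⟩ := this
      rw [LinearMap.smulRight_apply] at hu
      change F (φ.smulRight y) = 0 ∨ F (φ.smulRight y) = y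
      rw [← hu]
      rcases h2 (φ u) with e | e <;> rw [e] <;> simp)
    have hc' : ∀ y, F (φ.smulRight y) = c • y := hc
    intro y
    rw [hc', hc', map_smul, hf, smul_eq_mul, mul_one]
  let lam : Dual K (Dual K U) := f ∘ₗ F ∘ₗ (LinearMap.smulRightₗ.flip y0)
  obtain ⟨x0, hx0⟩ := (Module.evalEquiv K U).surjective lam
  have hx0' : ∀ φ : Dual K U, φ x0 = f (F (φ.smulRight y0)) := by
    intro φ
    have := congrArg (fun l => l φ) hx0
    exact this
  refine ⟨x0, fun s hs => ?_⟩
  let b := finBasis K V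
  have hsum : s = ∑ i, (b.coord i ∘ₗ s).smulRight (b i) := by
    ext u
    simp only [LinearMap.sum_apply, LinearMap.smulRight_apply, LinearMap.comp_apply,
      Basis.coord_apply]
    exact (b.sum_repr (s u)).symm
  conv_lhs => rw [hsum]
  rw [map_sum]
  conv_rhs => rw [← b.sum_repr (s x0)]
  refine Finset.sum_congr rfl fun i _ => ?_
  rw [key _ (fun y => h s hs _ y), ← hx0']
  rfl

/-- the quotient of T modulo y -/
noncomputable def TQ (T : Submodule K (V →ₗ[K] U)) (y : V) :
    Submodule K ((V ⧸ (K ∙ y)) →ₗ[K] U) :=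
  T.comap (LinearMap.lcomp K U (K ∙ y).mkQ)

lemma mem_TQ {T : Submodule K (V →ₗ[K] U)} {y : V} {t : (V ⧸ (K ∙ y)) →ₗ[K] U} :
    t ∈ TQ T y ↔ t ∘ₗ (K ∙ y).mkQ ∈ T := Iff.rfl

lemma SS_lift (T : Submodule K (V →ₗ[K] U)) (y : V) (s' : U →ₗ[K] (V ⧸ (K ∙ y))) :
    s' ∈ SS (TQ T y) ↔ ∃ s ∈ SS T, (K ∙ y).mkQ ∘ₗ s = s' := by
  constructor
  · intro hs'
    obtain ⟨s0, hs0⟩ := Module.projective_lifting_property (K ∙ y).mkQ s'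
      (Submodule.mkQ_surjective _)
    obtain ⟨φ, hφ⟩ := exists_factor ((LinearMap.applyₗ y : (V →ₗ[K] U) →ₗ[K] U) ∘ₗ T.subtype)
      ((tf K U V).flip s0 ∘ₗ T.subtype) (by
        rintro ⟨t, ht⟩ hty
        have hty : t y = 0 := hty
        let t' : (V ⧸ (K ∙ y)) →ₗ[K] U := (K ∙ y).liftQ t (by
          rw [Submodule.span_singleton_le_iff_mem]; exact hty)
        have e : t' ∘ₗ (K ∙ y).mkQ = t := Submodule.liftQ_mkQ _ _ _
        have ht' : t' ∈ TQ T y := by rw [mem_TQ, e]; exact ht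
        have := mem_SS.1 hs' t' ht'
        rw [tf_apply, ← hs0, LinearMap.comp_assoc, LinearMap.trace_comp_comm',
          LinearMap.comp_assoc, e] at this
        exact this)
    refine ⟨s0 - φ.smulRight y, ?_, ?_⟩
    · rw [mem_SS]
      intro t ht
      rw [map_sub, tf_smulRight, sub_eq_zero]
      exact (hφ ⟨t, ht⟩).symm
    · rw [← hs0, LinearMap.comp_sub]
      ext u
      simp
  · rintro ⟨s, hs, rfl⟩
    rw [mem_SS]
    intro t ht
    rw [tf_apply, LinearMap.comp_assoc, LinearMap.trace_comp_comm', LinearMap.comp_assoc]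
    exact mem_SS.1 hs _ ht

lemma Q_quot (h2 : ∀ c : K, c = 0 ∨ c = 1) (T : Submodule K (V →ₗ[K] U))
    (F : (U →ₗ[K] V) →ₗ[K] V) (d : V) (hd : d ≠ 0) (hF : Q T F d) (y : V) (hy : y ≠ d) :
    ∃ F' : (U →ₗ[K] (V ⧸ (K ∙ y))) →ₗ[K] (V ⧸ (K ∙ y)), (K ∙ y).mkQ d ≠ 0 ∧
      Q (TQ T y) F' ((K ∙ y).mkQ d) ∧
      ∀ s ∈ SS T, F' ((K ∙ y).mkQ ∘ₗ s) = (K ∙ y).mkQ (F s) := by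
  have hdy : d ∉ K ∙ y := by
    rw [mem_span_iff h2]; rintro (h | h)
    · exact hd h
    · exact hy h.symm
  obtain ⟨F', hF'⟩ := exists_factor
    ((LinearMap.llcomp K U V (V ⧸ (K ∙ y)) (K ∙ y).mkQ) ∘ₗ (SS T).subtype)
    ((K ∙ y).mkQ ∘ₗ F ∘ₗ (SS T).subtype) (by
      rintro ⟨s, hs⟩ h
      have h : (K ∙ y).mkQ ∘ₗ s = 0 := h
      have hr : ∀ u, s u ∈ K ∙ y := by
        intro u
        have := congrArg (fun l => l u) h
        simpa using this
      have := hF s hs (by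
        rintro ⟨u, hu⟩
        apply hdy; rw [← hu]; exact hr u)
      obtain ⟨u, hu⟩ := this
      change (K ∙ y).mkQ (F s) = 0
      rw [← hu]
      simpa using hr u)
  have hF'' : ∀ s ∈ SS T, F' ((K ∙ y).mkQ ∘ₗ s) = (K ∙ y).mkQ (F s) :=
    fun s hs => hF' ⟨s, hs⟩
  refine ⟨F', by simpa using hdy, ?_, hF''⟩
  intro s' hs' hds'
  obtain ⟨s, hs, rfl⟩ := (SS_lift T y s').1 hs'
  rw [hF'' s hs]
  obtain ⟨u, hu⟩ := hF s hs (by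
    rintro ⟨u, hu⟩
    exact hds' ⟨u, by rw [LinearMap.comp_apply, hu]⟩)
  exact ⟨u, by rw [LinearMap.comp_apply, hu]⟩

lemma glue (h2 : ∀ c : K, c = 0 ∨ c = 1) (T : Submodule K (V →ₗ[K] U)) (hN : NN T)
    (F : (U →ₗ[K] V) →ₗ[K] V) (d : V) (hd : d ≠ 0) (hF : Q T F d) (y1 y2 : V)
    (h1d : y1 ≠ d) (h2d : y2 ≠ d) (h12 : y1 ≠ y2)
    (H : ∀ y, (y = y1 ∨ y = y2) → ∀ (F' : (U →ₗ[K] (V ⧸ (K ∙ y))) →ₗ[K] (V ⧸ (K ∙ y)))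
      (d' : (V ⧸ (K ∙ y))), d' ≠ 0 → Q (TQ T y) F' d' → Loc (TQ T y) F') : Loc T F := by
  have key : ∀ y, (y = y1 ∨ y = y2) → ∃ x, ∀ s ∈ SS T, F s - s x ∈ K ∙ y := by
    intro y hy
    obtain ⟨F', h1, h3, h4⟩ := Q_quot h2 T F d hd hF y (by rcases hy with rfl | rfl <;> assumption)
    obtain ⟨x, hx⟩ := H y hy F' _ h1 h3
    refine ⟨x, fun s hs => ?_⟩
    have := hx _ ((SS_lift T y _).2 ⟨s, hs, rfl⟩)
    rw [h4 s hs, LinearMap.comp_apply, ← sub_eq_zero, ← map_sub] at this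
    rwa [Submodule.mkQ_apply, Submodule.Quotient.mk_eq_zero] at this
  obtain ⟨x1, hx1⟩ := key y1 (Or.inl rfl)
  obtain ⟨x2, hx2⟩ := key y2 (Or.inr rfl)
  have hle : (Submodule.span K {y1, y2}).dualAnnihilator ≤ AA T (x1 - x2) := by
    intro φ hφ
    rw [mem_AA']
    intro s hs
    rw [Submodule.mem_dualAnnihilator] at hφ
    apply hφ
    have : s (x1 - x2) = (F s - s x2) - (F s - s x1) := by rw [map_sub]; abel
    rw [this]
    refine sub_mem ?_ ?_
    · exact Submodule.span_mono (by simp) (hx2 s hs)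
    · exact Submodule.span_mono (by simp) (hx1 s hs)
  have hfr : finrank K (Submodule.span K {y1, y2}).dualAnnihilator ≤ finrank K (AA T (x1 - x2)) :=
    Submodule.finrank_mono hle
  have h3 : finrank K (Submodule.span K {y1, y2}) ≤ 2 := by
    classical
    have : finrank K (Submodule.span K (({y1, y2} : Finset V) : Set V)) ≤ 2 :=
      (finrank_span_finset_le_card _).trans Finset.card_le_two
    rwa [Finset.coe_pair] at this
  have h4 : finrank K (Submodule.span K {y1, y2}) +
      finrank K (Submodule.span K {y1, y2}).dualAnnihilator = finrank K V :=
    Subspace.finrank_add_finrank_dualAnnihilator_eq (Submodule.span K {y1, y2})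
  have h5 : AA T (x1 - x2) = ⊤ := by
    rcases hN (x1 - x2) with h | h
    · omega
    · exact h
  refine ⟨x1, fun s hs => ?_⟩
  have e : s (x1 - x2) = 0 := by
    rw [← Module.forall_dual_apply_eq_zero_iff K]
    intro φ
    have : φ ∈ AA T (x1 - x2) := by rw [h5]; trivial
    exact mem_AA'.1 this s hs
  rw [map_sub, sub_eq_zero] at e
  have k1 := hx1 s hs
  have k2 := hx2 s hs
  rw [← e] at k2
  rw [mem_span_iff h2] at k1 k2
  rw [← sub_eq_zero]
  rcases k1 with k | k
  · exact k
  · rcases k2 with k' | k'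
    · exact k'
    · exact absurd (k.symm.trans k') h12

end dual

section induct
variable {K : Type*} [Field K] {U : Type*} [AddCommGroup U] [Module K U] [FiniteDimensional K U]

section
variable {V : Type*} [AddCommGroup V] [Module K V] [FiniteDimensional K V]

lemma surj_prod {W X : Type*} [AddCommGroup W] [Module K W] [FiniteDimensional K W]
    [AddCommGroup X] [Module K X] [FiniteDimensional K X]
    (A B : Submodule K W) (T : Submodule K X) (G : (A × B) →ₗ[K] T) (hG : Function.Injective G)
    (h : finrank K T ≤ finrank K A + finrank K B) : Function.Surjective G := by
  have h1 : finrank K (A × B) = finrank K A + finrank K B := Module.finrank_prod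
  have h3 := LinearMap.finrank_le_finrank_of_injective hG
  exact (LinearMap.injective_iff_surjective_of_finrank_eq_finrank (by omega)).1 hG

lemma finrank_quot (y : V) (hy : y ≠ 0) : finrank K (V ⧸ (K ∙ y)) + 1 = finrank K V := by
  have := Submodule.finrank_quotient_add_finrank (K ∙ y)
  rwa [finrank_span_singleton hy] at this

lemma comp_mkQ_inj {W : Type*} [AddCommGroup W] [Module K W] (y : V) :
    Function.Injective (LinearMap.lcomp K W (K ∙ y).mkQ) := by
  intro a b h
  apply LinearMap.ext
  intro v
  obtain ⟨v, rfl⟩ := Submodule.mkQ_surjective _ v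
  exact congrArg (fun l => l v) h

lemma TQ_dim (T : Submodule K (V →ₗ[K] U)) (y : V) :
    finrank K (TQ T y) + finrank K (LinearMap.range
      ((LinearMap.applyₗ y : (V →ₗ[K] U) →ₗ[K] U) ∘ₗ T.subtype)) ≤ finrank K T := by
  have h := LinearMap.finrank_range_add_finrank_ker
    ((LinearMap.applyₗ y : (V →ₗ[K] U) →ₗ[K] U) ∘ₗ T.subtype)
  let f : TQ T y →ₗ[K] T :=
    LinearMap.codRestrict T ((LinearMap.lcomp K U (K ∙ y).mkQ) ∘ₗ (TQ T y).subtype)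
      (fun t => t.2)
  have hinj : Function.Injective f := by
    intro a b hab
    have : LinearMap.lcomp K U (K ∙ y).mkQ a = LinearMap.lcomp K U (K ∙ y).mkQ b :=
      congrArg Subtype.val hab
    exact Subtype.ext (comp_mkQ_inj y this)
  have hr : LinearMap.range f ≤ LinearMap.ker
      ((LinearMap.applyₗ y : (V →ₗ[K] U) →ₗ[K] U) ∘ₗ T.subtype) := by
    rintro _ ⟨t, rfl⟩
    change (t : (V ⧸ (K ∙ y)) →ₗ[K] U) ((K ∙ y).mkQ y) = 0
    have : (K ∙ y).mkQ y = 0 := by simp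
    rw [this, map_zero]
  have h1 := Submodule.finrank_mono hr
  rw [LinearMap.finrank_range_of_inj hinj] at h1
  omega

lemma TQ_dim1 (T : Submodule K (V →ₗ[K] U)) (y : V) (t : V →ₗ[K] U) (ht : t ∈ T)
    (hty : t y ≠ 0) : finrank K (TQ T y) + 1 ≤ finrank K T := by
  have h := TQ_dim T y
  have : 0 < finrank K (LinearMap.range
      ((LinearMap.applyₗ y : (V →ₗ[K] U) →ₗ[K] U) ∘ₗ T.subtype)) := by
    rw [Module.finrank_pos_iff_exists_ne_zero]
    exact ⟨⟨t y, ⟨t, ht⟩, rfl⟩, fun h => hty (congrArg Subtype.val h)⟩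
  omega

lemma TQ_dim2 (h2 : ∀ c : K, c = 0 ∨ c = 1) (T : Submodule K (V →ₗ[K] U)) (y : V)
    (t : V →ₗ[K] U) (ht : t ∈ T) (t' : V →ₗ[K] U) (ht' : t' ∈ T)
    (hty : t y ≠ 0) (hty' : t' y ≠ 0) (hne : t y ≠ t' y) :
    finrank K (TQ T y) + 2 ≤ finrank K T := by
  have h := TQ_dim T y
  by_contra hcon
  have : finrank K (LinearMap.range
      ((LinearMap.applyₗ y : (V →ₗ[K] U) →ₗ[K] U) ∘ₗ T.subtype)) ≤ 1 := by omega
  rw [finrank_le_one_iff] at this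
  obtain ⟨v, hv⟩ := this
  have key : ∀ t ∈ T, t y ≠ 0 → t y = v := by
    intro t ht hty
    obtain ⟨c, hc⟩ := hv ⟨t y, ⟨t, ht⟩, rfl⟩
    have hc := congrArg Subtype.val hc
    rcases h2 c with rfl | rfl
    · exfalso; apply hty; simpa using hc.symm
    · simpa using hc.symm
  exact hne ((key t ht hty).trans (key t' ht' hty').symm)

lemma AQ_le (T : Submodule K (V →ₗ[K] U)) (y : V) (x : U) :
    (AA (TQ T y) x).map (LinearMap.lcomp K K (K ∙ y).mkQ) ≤ AA T x := by
  rintro _ ⟨φ, hφ, rfl⟩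
  exact hφ

lemma AQ_finrank (T : Submodule K (V →ₗ[K] U)) (y : V) (x : U) :
    finrank K ((AA (TQ T y) x).map (LinearMap.lcomp K K (K ∙ y).mkQ)) = finrank K (AA (TQ T y) x) :=
  (Submodule.equivMapOfInjective _ (comp_mkQ_inj y) _).finrank_eq.symm

lemma NN_quot (T : Submodule K (V →ₗ[K] U)) (hN : NN T) (y : V) (hy0 : y ≠ 0)
    (hy : ∀ x, finrank K (AA T x) + 3 = finrank K V → ∃ φ ∈ AA T x, φ y ≠ 0) :
    NN (TQ T y) := by
  intro x
  have hq := finrank_quot (K := K) y hy0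
  rcases hN x with h | h
  · left
    have h1 := Submodule.finrank_mono (AQ_le T y x)
    rw [AQ_finrank] at h1
    rcases h.lt_or_eq with h' | h'
    · omega
    · obtain ⟨φ, hφ, hφy⟩ := hy x h'
      have : (AA (TQ T y) x).map (LinearMap.lcomp K K (K ∙ y).mkQ) < AA T x := by
        refine lt_of_le_of_ne (AQ_le T y x) fun e => ?_
        rw [← e] at hφ
        obtain ⟨ψ, -, rfl⟩ := hφ
        apply hφy
        change ψ ((K ∙ y).mkQ y) = 0
        have : (K ∙ y).mkQ y = 0 := by simp
        rw [this, map_zero]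
      have := Submodule.finrank_lt_finrank_of_lt this
      rw [AQ_finrank] at this
      omega
  · right
    rw [eq_top_iff]
    intro φ _
    have : φ ∘ₗ (K ∙ y).mkQ ∈ AA T x := by rw [h]; trivial
    exact this

/-- `AA T x` embeds in `T` -/
lemma AA_le (T : Submodule K (V →ₗ[K] U)) (x : U) (hx : x ≠ 0) :
    finrank K (AA T x) ≤ finrank K T := by
  let f : AA T x →ₗ[K] T :=
    LinearMap.codRestrict T ((LinearMap.smulRightₗ.flip x) ∘ₗ (AA T x).subtype) (fun t => t.2)
  apply LinearMap.finrank_le_finrank_of_injective (f := f)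
  intro a b hab
  have : (a : Dual K V).smulRight x = (b : Dual K V).smulRight x := congrArg Subtype.val hab
  apply Subtype.ext
  ext v
  have := congrArg (fun l => l v) this
  simpa [smul_left_injective, hx] using this

/-- if all values of T lie in {0,x} then T is given by `AA T x` -/
lemma form_of_range (h2 : ∀ c : K, c = 0 ∨ c = 1) (x : U) (hx : x ≠ 0)
    (t : V →ₗ[K] U) (h : ∀ y, t y = 0 ∨ t y = x) : ∃ φ : Dual K V, φ.smulRight x = t := by
  obtain ⟨f, hf, -⟩ := exists_dual_pair h2 x 0 hx hx
  refine ⟨f ∘ₗ t, ?_⟩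
  ext y
  rcases h y with e | e <;> simp [e, hf]

lemma T_le_AA (h2 : ∀ c : K, c = 0 ∨ c = 1) (T : Submodule K (V →ₗ[K] U)) (x : U) (hx : x ≠ 0)
    (h : ∀ t ∈ T, ∀ y, t y = 0 ∨ t y = x) : finrank K T ≤ finrank K (AA T x) := by
  have : T ≤ (AA T x).map (LinearMap.smulRightₗ.flip x) := by
    intro t ht
    obtain ⟨φ, rfl⟩ := form_of_range h2 x hx t (h t ht)
    exact ⟨φ, ht, rfl⟩
  exact (Submodule.finrank_mono this).trans (Submodule.finrank_map_le _ _)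

lemma exists_both (h2 : ∀ c : K, c = 0 ∨ c = 1) (φ ψ : Dual K V) (hφ : φ ≠ 0) (hψ : ψ ≠ 0) :
    ∃ y, φ y = 1 ∧ ψ y = 1 := by
  obtain ⟨a, ha⟩ : ∃ a, φ a ≠ 0 := by
    by_contra! h; exact hφ (by ext; simp [h])
  obtain ⟨b, hb⟩ : ∃ b, ψ b ≠ 0 := by
    by_contra! h; exact hψ (by ext; simp [h])
  have ha := (h2 _).resolve_left ha
  have hb := (h2 _).resolve_left hb
  rcases h2 (ψ a) with h | h
  · rcases h2 (φ b) with h' | h'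
    · exact ⟨a + b, by simp [ha, h'], by simp [hb, h]⟩
    · exact ⟨b, h', hb⟩
  · exact ⟨a, ha, h⟩

end

universe v

lemma lemmaA (h2 : ∀ c : K, c = 0 ∨ c = 1) : ∀ (n : ℕ) (V : Type v) [AddCommGroup V] [Module K V]
    [FiniteDimensional K V] (_ : finrank K V = n) (T : Submodule K (V →ₗ[K] U))
    (_ : finrank K T + 3 ≤ n) (F : (U →ₗ[K] V) →ₗ[K] V) (d : V) (_ : d ≠ 0) (_ : Q T F d),
    Loc T F := by
  intro n
  induction n with
  | zero => intros; omega
  | succ n ih =>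
    intro V _ _ _ hn T hT F d hd hF
    by_cases h0 : T = ⊥
    · apply full h2 (by omega) T F d hd hF
      intro s hs ψ y
      rw [mem_SS]
      intro t ht
      rw [h0, Submodule.mem_bot] at ht
      simp [ht]
    obtain ⟨t, ht, ht0⟩ := Submodule.exists_mem_ne_zero_of_ne_bot h0
    have hpos : 0 < finrank K T := by
      rw [Module.finrank_pos_iff_exists_ne_zero]
      exact ⟨⟨t, ht⟩, fun h => ht0 (congrArg Subtype.val h)⟩
    obtain ⟨y0, hy0⟩ : ∃ y, t y ≠ 0 := by
      by_contra! h; exact ht0 (by ext; simp [h])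
    obtain ⟨f, hf, -⟩ := exists_dual_pair h2 (t y0) 0 hy0 hy0
    obtain ⟨y1, y2, h1d, h2d, h12, hq1, hq2⟩ := exists_two h2 (by omega) (f ∘ₗ t) (f ∘ₗ t) 0 0 y0
      (by simp [hf]) d
    have hN : NN T := by
      intro x
      by_cases hx : x = 0
      · right
        rw [eq_top_iff]; intro φ _
        rw [mem_AA, hx]
        convert zero_mem T
        ext; simp
      · left
        have := AA_le T x hx
        omega
    refine glue h2 T hN F d hd hF y1 y2 h1d h2d h12 ?_
    intro y hy F' d' hd' hQ'
    have hty : t y ≠ 0 := by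
      intro h
      rcases hy with rfl | rfl <;> simp [h] at hq1 hq2
    have hy0 : y ≠ 0 := by rintro rfl; simp at hty
    have := TQ_dim1 T y t ht hty
    have hq := finrank_quot (K := K) y hy0
    exact ih _ (by omega) _ (by omega) F' d' hd' hQ'

lemma main (h2 : ∀ c : K, c = 0 ∨ c = 1) : ∀ (n : ℕ) (V : Type v) [AddCommGroup V] [Module K V]
    [FiniteDimensional K V] (_ : finrank K V = n) (T : Submodule K (V →ₗ[K] U)) (_ : NN T)
    (_ : finrank K T + 6 ≤ 2 * n) (F : (U →ₗ[K] V) →ₗ[K] V) (d : V) (_ : d ≠ 0) (_ : Q T F d),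
    Loc T F := by
  intro n
  induction n with
  | zero => intros; omega
  | succ n ih =>
    intro V _ _ _ hn T hN hT F d hd hF
    by_cases hA : finrank K T + 3 ≤ n + 1
    · exact lemmaA h2 _ V hn T hA F d hd hF
    have hm : 4 ≤ finrank K V := by omega
    have hz : ∀ u v : U, u + v = 0 ↔ u = v := add_eq_zero_iff h2
    -- two good points suffice
    have fin : ∀ (a b c e : Dual K V) (y0 : V), a y0 * b y0 + c y0 * e y0 ≠ 0 →
        (∀ y, a y * b y + c y * e y ≠ 0 → (∃ t ∈ T, ∃ t' ∈ T, t y ≠ 0 ∧ t' y ≠ 0 ∧ t y ≠ t' y) ∧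
          ∀ x, finrank K (AA T x) + 3 = finrank K V → ∃ φ ∈ AA T x, φ y ≠ 0) → Loc T F := by
      intro a b c e y0 hy0 H
      obtain ⟨y1, y2, h1d, h2d, h12, hq1, hq2⟩ := exists_two h2 hm a b c e y0 hy0 d
      refine glue h2 T hN F d hd hF y1 y2 h1d h2d h12 ?_
      intro y hy F' d' hd' hQ'
      obtain ⟨⟨t, ht, t', ht', k1, k2, k3⟩, k4⟩ := H y (by rcases hy with rfl | rfl <;> assumption)
      have hy0 : y ≠ 0 := by rintro rfl; simp at k1
      have := TQ_dim2 h2 T y t ht t' ht' k1 k2 k3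
      have hq := finrank_quot (K := K) y hy0
      exact ih _ (by omega) _ (NN_quot T hN y hy0 k4) (by omega) F' d' hd' hQ'
    have hAx0 : ∀ x, finrank K (AA T x) + 3 = finrank K V → x ≠ 0 := by
      rintro x h rfl
      have : AA T (0 : U) = ⊤ := by
        rw [eq_top_iff]; intro φ _
        rw [mem_AA]
        convert zero_mem T
        ext; simp
      rw [this, finrank_top, Subspace.dual_finrank_eq] at h
      omega
    have hAne : ∀ x, finrank K (AA T x) + 3 = finrank K V → ∃ φ ∈ AA T x, φ ≠ 0 := by
      intro x h
      apply Submodule.exists_mem_ne_zero_of_ne_bot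
      intro h'
      rw [h', finrank_bot] at h
      omega
    by_cases hex : ∃ x, finrank K (AA T x) + 3 = finrank K V
    · obtain ⟨x, hx⟩ := hex
      have hx0 := hAx0 x hx
      obtain ⟨φ, hφ, hφ0⟩ := hAne x hx
      by_cases hex2 : ∃ x', x' ≠ x ∧ finrank K (AA T x') + 3 = finrank K V
      · -- case I
        obtain ⟨x', hne, hx'⟩ := hex2
        have hx0' := hAx0 x' hx'
        obtain ⟨φ', hφ', hφ0'⟩ := hAne x' hx'
        obtain ⟨f, hfx, hfx'⟩ := exists_dual_pair h2 x x' hx0 hne.symm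
        obtain ⟨g, hgx', hgx⟩ := exists_dual_pair h2 x' x hx0' hne
        let G : (AA T x × AA T x') →ₗ[K] T := LinearMap.codRestrict T
          (((LinearMap.smulRightₗ.flip x) ∘ₗ (AA T x).subtype).coprod
            ((LinearMap.smulRightₗ.flip x') ∘ₗ (AA T x').subtype))
          (fun p => add_mem p.1.2 p.2.2)
        have hG : ∀ (p : AA T x × AA T x') (v : V),
            (G p : V →ₗ[K] U) v = (p.1 : Dual K V) v • x + (p.2 : Dual K V) v • x' :=
          fun p v => rfl
        have hGi : Function.Injective G := by
          intro p p' hpp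
          have e : ∀ v, (p.1 : Dual K V) v • x + (p.2 : Dual K V) v • x' =
              (p'.1 : Dual K V) v • x + (p'.2 : Dual K V) v • x' := by
            intro v; rw [← hG, ← hG, hpp]
          refine Prod.ext (Subtype.ext (LinearMap.ext fun v => ?_))
            (Subtype.ext (LinearMap.ext fun v => ?_))
          · have := congrArg f (e v)
            simpa [hfx, hfx'] using this
          · have := congrArg g (e v)
            simpa [hgx, hgx'] using this
        have hGs : Function.Surjective G := by
          exact surj_prod (AA T x) (AA T x') T G hGi (by omega)
        obtain ⟨y0, hy1, hy2⟩ := exists_both h2 φ φ' hφ0 hφ0'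
        refine fin φ φ' 0 0 y0 (by simp [hy1, hy2]) ?_
        intro y hy
        have hy1 : φ y = 1 := (h2 _).resolve_left (by intro h; simp [h] at hy)
        have hy2 : φ' y = 1 := (h2 _).resolve_left (by intro h; simp [h] at hy)
        refine ⟨⟨_, hφ, _, hφ', ?_, ?_, ?_⟩, ?_⟩
        · simpa [hy1] using hx0
        · simpa [hy2] using hx0'
        · simpa [hy1, hy2] using hne.symm
        · intro x3 hx3
          by_cases e1 : x3 = x
          · subst e1; exact ⟨φ, hφ, by simp [hy1]⟩
          by_cases e2 : x3 = x'
          · subst e2; exact ⟨φ', hφ', by simp [hy2]⟩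
          have hx30 := hAx0 x3 hx3
          have key : ∀ χ ∈ AA T x3, ∃ p : AA T x × AA T x', ∀ v,
              χ v • x3 = (p.1 : Dual K V) v • x + (p.2 : Dual K V) v • x' := by
            intro χ hχ
            obtain ⟨p, hp⟩ := hGs ⟨χ.smulRight x3, hχ⟩
            refine ⟨p, fun v => ?_⟩
            rw [← hG, hp]; rfl
          have hsum : x3 = x + x' := by
            obtain ⟨χ, hχ, hχ0⟩ := hAne x3 hx3
            obtain ⟨p, hp⟩ := key χ hχ
            obtain ⟨v, hv⟩ : ∃ v, χ v ≠ 0 := by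
              by_contra! h; exact hχ0 (by ext; simp [h])
            have := hp v
            rw [(h2 _).resolve_left hv, one_smul] at this
            rcases h2 ((p.1 : Dual K V) v) with h | h <;>
              rcases h2 ((p.2 : Dual K V) v) with h' | h' <;> rw [h, h'] at this <;>
              simp at this
            · exact absurd this hx30
            · exact absurd this e2
            · exact absurd this e1
            · exact this
          have hle : AA T x3 ≤ AA T x := by
            intro χ hχ
            obtain ⟨p, hp⟩ := key χ hχ
            have : χ = p.1 := by
              ext v
              have := congrArg f (hp v)
              simpa [hsum, hfx, hfx'] using this
            rw [this]; exact p.1.2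
          have heq := Submodule.eq_of_le_of_finrank_eq hle (by omega)
          exact ⟨φ, by rw [heq]; exact hφ, by simp [hy1]⟩
      · -- case II
        push Not at hex2
        obtain ⟨t, ht, y1, ht0, htx⟩ : ∃ t ∈ T, ∃ y1, t y1 ≠ 0 ∧ t y1 ≠ x := by
          by_contra! h
          have := T_le_AA h2 T x hx0 (fun t ht y => by
            by_cases h' : t y = 0
            · exact Or.inl h'
            · exact Or.inr (h t ht y h'))
          omega
        obtain ⟨f, hf, hfx⟩ := exists_dual_pair h2 (t y1) x ht0 htx
        obtain ⟨y0, hy1, hy2⟩ := exists_both h2 φ (f ∘ₗ t) hφ0 (by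
          intro h
          have := congrArg (fun l => l y1) h
          simp [hf] at this)
        refine fin φ (f ∘ₗ t) 0 0 y0 (by rw [hy1, hy2]; simp) ?_
        intro y hy
        have hy1 : φ y = 1 := (h2 _).resolve_left (by intro h; simp [h] at hy)
        have hy2 : f (t y) = 1 := (h2 _).resolve_left (by intro h; simp [h] at hy)
        refine ⟨⟨_, hφ, t, ht, ?_, ?_, ?_⟩, ?_⟩
        · simpa [hy1] using hx0
        · intro h; simp [h] at hy2
        · intro h
          simp [hy1] at h
          rw [← h, hfx] at hy2
          exact zero_ne_one hy2
        · intro x3 hx3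
          have : x3 = x := by
            by_contra h; exact hex2 x3 h hx3
          subst this
          exact ⟨φ, hφ, by simp [hy1]⟩
    · -- case III
      push Not at hex
      by_cases hr : ∃ t ∈ T, ∃ t' ∈ T, ∃ y, t y ≠ 0 ∧ t' y ≠ 0 ∧ t y ≠ t' y
      · obtain ⟨t, ht, t', ht', y0, k1, k2, k3⟩ := hr
        obtain ⟨f, hf, hf'⟩ := exists_dual_pair h2 (t y0) (t' y0) k1 k3
        obtain ⟨g, hg', hg⟩ := exists_dual_pair h2 (t' y0) (t y0) k2 k3.symm
        refine fin (f ∘ₗ t) (g ∘ₗ t') (f ∘ₗ t') (g ∘ₗ t) y0 (by simp [hf, hf', hg, hg']) ?_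
        intro y hy
        refine ⟨⟨t, ht, t', ht', ?_, ?_, ?_⟩, fun x h => absurd h (hex x)⟩
        · intro h; simp [h] at hy
        · intro h; simp [h] at hy
        · intro h; apply hy; simp only [LinearMap.comp_apply, h]
          exact add_self h2 _
      · push Not at hr
        rcases rank_one h2 T (fun t1 h1 t2 h3 y => by
          by_cases c1 : t1 y = 0
          · exact Or.inl c1
          · by_cases c2 : t2 y = 0
            · exact Or.inr (Or.inl c2)
            · exact Or.inr (Or.inr (hr t1 h1 t2 h3 y c1 c2))) with ⟨x, hx⟩ | ⟨t, ht, hs⟩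
        · by_cases hx0 : x = 0
          · exfalso
            have : T = ⊥ := by
              rw [eq_bot_iff]
              intro t ht
              rw [Submodule.mem_bot]
              ext y
              have := hx t ht y
              rw [hx0] at this
              simpa using this
            rw [this, finrank_bot] at hA
            omega
          have h1 := T_le_AA h2 T x hx0 hx
          rcases hN x with h | h
          · omega
          · apply full h2 (by omega) T F d hd hF
            intro s hs ψ y
            have hsx : s x = 0 := by
              rw [← Module.forall_dual_apply_eq_zero_iff K]
              intro χ
              have : χ ∈ AA T x := by rw [h]; trivial
              exact mem_AA'.1 this s hs
            rw [mem_SS]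
            intro t ht
            obtain ⟨χ, rfl⟩ := form_of_range h2 x hx0 t (hx t ht)
            rw [tf_smulRight']
            simp [hsx]
        · exfalso
          have : finrank K T ≤ 1 := by
            rw [finrank_le_one_iff]
            refine ⟨⟨t, ht⟩, fun w => ?_⟩
            rcases hs w w.2 with h | h
            · exact ⟨0, Subtype.ext (by simp [h])⟩
            · exact ⟨1, Subtype.ext (by simp [h])⟩
          omega

end induct

end QRC

/-- Let `K` be the field with exactly 2 elements and `S` a linear
subspace of `L(U,V)` with `codim S ≤ 2 dim V − 6`. Then either `S` has special type 1 or
special type 2 (there is `x ∈ U` with `dim Sx = 1` or `dim Sx = 2`), or every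
quasi-range-compatible additive homomorphism `F : S → V` is local. -/
theorem quasi_range_compatible_hom_local_or_special_type_one_or_two
    (K U V : Type*) [Field K] (hK : Nat.card K = 2)
    [AddCommGroup U] [Module K U] [FiniteDimensional K U]
    [AddCommGroup V] [Module K V] [FiniteDimensional K V]
    (S : Submodule K (U →ₗ[K] V))
    (h1 : Module.finrank K (U →ₗ[K] V) + 6 ≤
      Module.finrank K S + 2 * Module.finrank K V) :
    (∃ x : U, Module.finrank K (Submodule.map (LinearMap.applyₗ x) S) = 1 ∨
      Module.finrank K (Submodule.map (LinearMap.applyₗ x) S) = 2) ∨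
    (∀ F : ↥S →+ V,
      (∃ D : Submodule K V, Module.finrank K D = 1 ∧
        ∀ s : ↥S, ¬ D ≤ LinearMap.range (s : U →ₗ[K] V) →
          F s ∈ LinearMap.range (s : U →ₗ[K] V)) →
      ∃ x : U, ∀ s : ↥S, F s = (s : U →ₗ[K] V) x) := by
  have h2 : ∀ c : K, c = 0 ∨ c = 1 := by
    have : Finite K := Nat.finite_of_card_ne_zero (by omega)
    intro c
    by_contra! h
    classical
    have h3 : ({0, 1, c} : Finset K).card = 3 := by
      rw [Finset.card_eq_three]
      exact ⟨0, 1, c, zero_ne_one, h.1.symm, h.2.symm, rfl⟩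
    have : Fintype K := Fintype.ofFinite K
    have h4 := Finset.card_le_univ ({0, 1, c} : Finset K)
    rw [h3, ← Nat.card_eq_fintype_card, hK] at h4
    omega
  rw [or_iff_not_imp_left]
  intro hspec F ⟨D, hD, hF⟩
  push Not at hspec
  -- the generator of D
  obtain ⟨d0, hd0, hd⟩ := finrank_eq_one_iff'.1 hD
  have hdD : D = Submodule.span K {(d0 : V)} := by
    ext v
    rw [Submodule.mem_span_singleton]
    constructor
    · intro hv
      obtain ⟨c, hc⟩ := hd ⟨v, hv⟩
      exact ⟨c, congrArg Subtype.val hc⟩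
    · rintro ⟨c, rfl⟩; exact D.smul_mem _ d0.2
  -- T
  let T : Submodule K (V →ₗ[K] U) := S.dualAnnihilator.comap (QRC.tf K U V)
  have hTmap : T.map (QRC.tf K U V) = S.dualAnnihilator :=
    Submodule.map_comap_eq_of_surjective QRC.tf_bij.2 _
  have hST : QRC.SS T = S := by
    rw [QRC.SS, hTmap, Subspace.dualAnnihilator_dualCoannihilator_eq]
  have hTfr : Module.finrank K S + Module.finrank K T = Module.finrank K (U →ₗ[K] V) := by
    rw [← Subspace.finrank_add_finrank_dualAnnihilator_eq S, ← hTmap,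
      (Submodule.equivMapOfInjective _ QRC.tf_bij.1 T).finrank_eq]
  -- extension of F
  let F0 : ↥S →ₗ[K] V :=
    { toFun := F
      map_add' := F.map_add
      map_smul' := by
        intro c s
        rcases h2 c with rfl | rfl <;> simp }
  obtain ⟨F1, hF1⟩ := F0.exists_extend
  have hF1' : ∀ s : ↥S, F1 s = F s := fun s => congrArg (fun l => l s) hF1
  have hN : QRC.NN T := by
    intro x
    have e : QRC.AA T x = (Submodule.map (LinearMap.applyₗ x) S).dualAnnihilator := by
      ext φ
      rw [QRC.mem_AA', hST, Submodule.mem_dualAnnihilator]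
      simp
    have h4' := Subspace.finrank_add_finrank_dualAnnihilator_eq
      (Submodule.map (LinearMap.applyₗ x) S)
    rw [← e] at h4'
    have h4 : Module.finrank K (Submodule.map (LinearMap.applyₗ x) S) +
      Module.finrank K (QRC.AA T x) = Module.finrank K V := h4'
    have h5 := hspec x
    by_cases h6 : Module.finrank K (Submodule.map (LinearMap.applyₗ x) S) = 0
    · right
      apply Submodule.eq_top_of_finrank_eq
      rw [Subspace.dual_finrank_eq]; omega
    · left; omega
  obtain ⟨x, hx⟩ := QRC.main h2 _ V rfl T hN (by omega) F1 (d0 : V)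
    (fun h => hd0 (Subtype.ext h)) (by
      intro s hs hds
      rw [hST] at hs
      have := hF ⟨s, hs⟩ (by
        rw [hdD, Submodule.span_singleton_le_iff_mem]
        exact hds)
      rw [← hF1'] at this
      exact this)
  refine ⟨x, fun s => ?_⟩
  rw [← hF1', hx s (by rw [hST]; exact s.2)]
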